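/- arXiv:2406.11488 — 3 statements merged into one kernel-verified Lean document; each statement's English description precedes it below -/
import Mathlib

section
/- Let Q = Q⁺ ⊎ Q⁻ be a finite set of size n > 0 with Q⁺ ≠ ∅, let χ be a finite set of size k ≥ 0 and let ℓ > 0. Then every merging forest F on (Q, χ, ℓ) has at most 2n−2 nodes and at most 2n−2 edges, and the number of merging forests on (Q, χ, ℓ) is at most ℓ^{k(n−1)}·(2n−1)^{2n−3} (bound read in the nonnegative reals). -/
namespace Paper

/-! ## Two-way parity automata and transducers over infinite words.

An infinite word over an alphabet `A` is a function `ℕ → A`.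
A configuration `⊢ u p v` with `w = u v` is encoded as a pair `(p, |u|) : Q × ℕ`.
The left end-marker `⊢` is encoded as `(none : Option A)`. -/

/-- A two-way automaton (without acceptance condition): states `Q` partitioned into forward
states (`fwd`) and backward states, an initial forward state, and a transition relation `Δ`
over `Q × (A ∪ {⊢}) × Q` where transitions on the end-marker `⊢` (encoded `none`) go from
backward to forward states. -/
structure TwoWayAut (A : Type) where
  Q : Type
  finQ : Fintype Q
  fwd : Q → Prop
  init : Q
  init_fwd : fwd init
  Δ : Set (Q × Option A × Q)
  marker : ∀ p q, (p, (none : Option A), q) ∈ Δ → ¬ fwd p ∧ fwd q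

attribute [instance] TwoWayAut.finQ

variable {A B : Type}

/-- `StepVia M w c t c'` : from configuration `c`, using transition `t`, the automaton `M`
reaches the successor configuration `c'` on input word `w`. -/
def StepVia (M : TwoWayAut A) (w : ℕ → A) (c : M.Q × ℕ)
    (t : M.Q × Option A × M.Q) (c' : M.Q × ℕ) : Prop :=
  t ∈ M.Δ ∧ t.1 = c.1 ∧ t.2.2 = c'.1 ∧
    ((M.fwd c.1 ∧ t.2.1 = some (w c.2) ∧
        ((M.fwd c'.1 ∧ c'.2 = c.2 + 1) ∨ (¬ M.fwd c'.1 ∧ c'.2 = c.2))) ∨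
     (¬ M.fwd c.1 ∧ 0 < c.2 ∧ t.2.1 = some (w (c.2 - 1)) ∧
        ((M.fwd c'.1 ∧ c'.2 = c.2) ∨ (¬ M.fwd c'.1 ∧ c'.2 = c.2 - 1))) ∨
     (¬ M.fwd c.1 ∧ c.2 = 0 ∧ t.2.1 = none ∧ c'.2 = 0))

/-- The successor relation on configurations. -/
def Step (M : TwoWayAut A) (w : ℕ → A) (c c' : M.Q × ℕ) : Prop :=
  ∃ t, StepVia M w c t c'

/-- An infinite run of `M` on `w`, given by its configurations and the transitions taken. -/
def IsRun (M : TwoWayAut A) (w : ℕ → A) (cfg : ℕ → M.Q × ℕ)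
    (tr : ℕ → M.Q × Option A × M.Q) : Prop :=
  cfg 0 = (M.init, 0) ∧ ∀ i, StepVia M w (cfg i) (tr i) (cfg (i + 1))

/-- The run reads the whole word: the prefix lengths are unbounded. -/
def ReadsWhole (M : TwoWayAut A) (cfg : ℕ → M.Q × ℕ) : Prop :=
  ∀ n : ℕ, ∃ i, n ≤ (cfg i).2

/-- `t` occurs infinitely often in the sequence `tr`. -/
def InfOften {T : Type} (tr : ℕ → T) (t : T) : Prop :=
  ∀ n, ∃ i, n ≤ i ∧ tr i = t

def Deterministic (M : TwoWayAut A) : Prop :=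
  ∀ p a q q', (p, a, q) ∈ M.Δ → (p, a, q') ∈ M.Δ → q = q'

def Codeterministic (M : TwoWayAut A) : Prop :=
  ∀ p p' a q, (p, a, q) ∈ M.Δ → (p', a, q) ∈ M.Δ → p = p'

def Reversible (M : TwoWayAut A) : Prop :=
  Deterministic M ∧ Codeterministic M

def Oneway (M : TwoWayAut A) : Prop := ∀ q, M.fwd q

/-- A two-way parity automaton: a two-way automaton together with a finite family of
coloring functions (indexed by `CIdx`). -/
structure ParityAut (A : Type) extends TwoWayAut A where
  CIdx : Type
  finC : Fintype CIdx
  color : CIdx → (Q × Option A × Q) → ℕ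

attribute [instance] ParityAut.finC

/-- The parity acceptance condition: for every coloring function, the minimal color of the
transitions taken infinitely often is even. -/
def ParityCond (M : ParityAut A) (tr : ℕ → M.Q × Option A × M.Q) : Prop :=
  ∀ c : M.CIdx, Even (sInf {m : ℕ | ∃ t, InfOften tr t ∧ M.color c t = m})

/-- Acceptance of an infinite word by a two-way parity automaton. -/
def ParityAut.Accepts (M : ParityAut A) (w : ℕ → A) : Prop :=
  ∃ cfg tr, IsRun M.toTwoWayAut w cfg tr ∧ ReadsWhole M.toTwoWayAut cfg ∧ ParityCond M tr

/-- All colors of `M` (on its transitions) belong to `{0, …, ℓ-1}`. -/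
def ColorsLt (M : ParityAut A) (ℓ : ℕ) : Prop :=
  ∀ (c : M.CIdx) t, t ∈ M.Δ → M.color c t < ℓ

/-- `l` is a prefix of the infinite word `x`. -/
def IsPrefixOf {C : Type} (l : List C) (x : ℕ → C) : Prop :=
  ∀ (i : ℕ) (h : i < l.length), l.get ⟨i, h⟩ = x i

/-- Concatenation of the first `n` words of a sequence of finite words. -/
def prefixCat {C : Type} (f : ℕ → List C) : ℕ → List C
  | 0 => []
  | n + 1 => prefixCat f n ++ f n

/-- The concatenation of the sequence of finite words `f` is the infinite word `x`. -/
def FlattenTo {C : Type} (f : ℕ → List C) (x : ℕ → C) : Prop :=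
  (∀ n, IsPrefixOf (prefixCat f n) x) ∧ ∀ m, ∃ n, m ≤ (prefixCat f n).length

/-- A two-way parity transducer: a two-way parity automaton (whose underlying automaton is
required to be deterministic via hypotheses) together with an output function. -/
structure TwoWayTrans (A B : Type) extends ParityAut A where
  out : (Q × Option A × Q) → List B

/-- `T.Realizes w x` : the word `w` is accepted by (the deterministic transducer) `T`,
the produced output is infinite and equals `x`.  This is the graph of the partial function
`⟦T⟧ : A^ω ⇀ B^ω`. -/
def TwoWayTrans.Realizes (T : TwoWayTrans A B) (w : ℕ → A) (x : ℕ → B) : Prop :=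
  ∃ cfg tr, IsRun T.toTwoWayAut w cfg tr ∧ ReadsWhole T.toTwoWayAut cfg ∧
    ParityCond T.toParityAut tr ∧ FlattenTo (fun i => T.out (tr i)) x

/-- A two-way Büchi transducer: accepting transitions `acc` instead of coloring functions. -/
structure BuchiTrans (A B : Type) extends TwoWayAut A where
  acc : Set (Q × Option A × Q)
  out : (Q × Option A × Q) → List B

def BuchiTrans.Realizes (T : BuchiTrans A B) (w : ℕ → A) (x : ℕ → B) : Prop :=
  ∃ cfg tr, IsRun T.toTwoWayAut w cfg tr ∧ ReadsWhole T.toTwoWayAut cfg ∧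
    (∀ n, ∃ i, n ≤ i ∧ tr i ∈ T.acc) ∧ FlattenTo (fun i => T.out (tr i)) x

/-- A two-way transducer with no acceptance condition. -/
structure NoAccTrans (A B : Type) extends TwoWayAut A where
  out : (Q × Option A × Q) → List B

def NoAccTrans.Realizes (T : NoAccTrans A B) (w : ℕ → A) (x : ℕ → B) : Prop :=
  ∃ cfg tr, IsRun T.toTwoWayAut w cfg tr ∧ ReadsWhole T.toTwoWayAut cfg ∧
    FlattenTo (fun i => T.out (tr i)) x

/-! ## One-way parity automata, transducers, and copyless parity streaming string
transducers.  A one-way automaton has only forward states and never reads the end-marker,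
so we use a simplified (equivalent) presentation. -/

structure OnewayAut (A : Type) where
  Q : Type
  finQ : Fintype Q
  init : Q
  Δ : Set (Q × A × Q)
  CIdx : Type
  finC : Fintype CIdx
  color : CIdx → (Q × A × Q) → ℕ

attribute [instance] OnewayAut.finQ
attribute [instance] OnewayAut.finC

def OnewayDet (M : OnewayAut A) : Prop :=
  ∀ p a q q', (p, a, q) ∈ M.Δ → (p, a, q') ∈ M.Δ → q = q'

def OnewayRun (M : OnewayAut A) (w : ℕ → A) (s : ℕ → M.Q) : Prop :=
  s 0 = M.init ∧ ∀ i, (s i, w i, s (i + 1)) ∈ M.Δ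

def OnewayParityCond (M : OnewayAut A) (tr : ℕ → M.Q × A × M.Q) : Prop :=
  ∀ c : M.CIdx, Even (sInf {m : ℕ | ∃ t, InfOften tr t ∧ M.color c t = m})

def OnewayAut.Accepts (M : OnewayAut A) (w : ℕ → A) : Prop :=
  ∃ s, OnewayRun M w s ∧ OnewayParityCond M (fun i => (s i, w i, s (i + 1)))

def OnewayColorsLt (M : OnewayAut A) (ℓ : ℕ) : Prop :=
  ∀ (c : M.CIdx) t, t ∈ M.Δ → M.color c t < ℓ

/-- A one-way (deterministic) parity transducer. -/
structure OnewayTrans (A B : Type) extends OnewayAut A where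
  out : (Q × A × Q) → List B

def OnewayTrans.Realizes (T : OnewayTrans A B) (w : ℕ → A) (x : ℕ → B) : Prop :=
  ∃ s, OnewayRun T.toOnewayAut w s ∧
    OnewayParityCond T.toOnewayAut (fun i => (s i, w i, s (i + 1))) ∧
    FlattenTo (fun i => T.out (s i, w i, s (i + 1))) x

/-- Number of occurrences of `a` in the list `l` (classically). -/
noncomputable def occ {C : Type} (a : C) (l : List C) : ℕ :=
  l.countP fun x => @decide (x = a) (Classical.propDecidable _)

/-- A substitution `σ : R → (R ⊎ B)*` is copyless if every register occurs at most once in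
the concatenation of all the `σ r'`. -/
def Copyless {R C : Type} [Fintype R] (σ : R → List (R ⊕ C)) : Prop :=
  ∀ r : R, (∑ r' : R, occ (Sum.inl r) (σ r')) ≤ 1

/-- Applying an assignment `ν : R → B*` (extended to a morphism `(R ⊎ B)* → B*`). -/
def subApply {R C : Type} (ν : R → List C) : List (R ⊕ C) → List C
  | [] => []
  | Sum.inl r :: l => ν r ++ subApply ν l
  | Sum.inr b :: l => b :: subApply ν l

/-- A copyless parity streaming string transducer: a (deterministic) one-way parity
automaton with a finite set `R` of registers, a distinguished output register, and copyless
register updates, where the update of `outReg` always starts with `outReg`. -/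
structure CPSST (A B : Type) extends OnewayAut A where
  R : Type
  finR : Fintype R
  outReg : R
  upd : (Q × A × Q) → R → List (R ⊕ B)
  copyless : ∀ t, @Copyless R B finR (upd t)
  out_form : ∀ t, ∃ γ, upd t outReg = Sum.inl outReg :: γ

attribute [instance] CPSST.finR

/-- The register contents along a run: `ν_0 r = ε` and `ν_{i+1} = ν_i ∘ λ(t_i)`. -/
def regVal (T : CPSST A B) (w : ℕ → A) (s : ℕ → T.Q) : ℕ → T.R → List B
  | 0 => fun _ => []
  | i + 1 => fun r => subApply (regVal T w s i) (T.upd (s i, w i, s (i + 1)) r)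

/-- `T.Realizes w x` : the (deterministic) CPSST `T` has an accepting run on `w` whose
output-register contents are unbounded with limit `x`. -/
def CPSST.Realizes (T : CPSST A B) (w : ℕ → A) (x : ℕ → B) : Prop :=
  ∃ s, OnewayRun T.toOnewayAut w s ∧
    OnewayParityCond T.toOnewayAut (fun i => (s i, w i, s (i + 1))) ∧
    (∀ i, IsPrefixOf (regVal T w s i T.outReg) x) ∧
    (∀ m, ∃ i, m ≤ (regVal T w s i T.outReg).length)

/-- The one-way parity transducer with the same underlying automaton as the CPSST `T`,
which outputs on each transition the (copyless) substitution that `T` applies. -/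
def enrich (T : CPSST A B) :
    OnewayTrans A {σ : T.R → List (T.R ⊕ B) // Copyless σ} where
  toOnewayAut := T.toOnewayAut
  out := fun t => [⟨T.upd t, T.copyless t⟩]

/-! ## Merging forests -/

/-- A merging forest on `(Q⁺ ⊎ Q⁻, χ, ℓ)`: a finite rooted forest (given by a `parent` map
with no cycles) whose leaves (childless nodes) are injectively labeled in `Q⁻` and carry a
`χ`-tuple of integers `< ℓ`, whose roots are injectively labeled in `Q⁺`, and in which every
unary node (exactly one child) is a root. -/
structure MForest (Qp Qm χ : Type) (ℓ : ℕ) where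
  V : Type
  finV : Fintype V
  parent : V → Option V
  acyc : ∀ v : V, ¬ Relation.TransGen (fun a b => parent a = some b) v v
  leafLab : V → Qm
  rootLab : V → Qp
  tup : V → χ → ℕ
  tup_lt : ∀ v, (∀ u, parent u ≠ some v) → ∀ c, tup v c < ℓ
  leaf_inj : ∀ u v, (∀ u', parent u' ≠ some u) → (∀ v', parent v' ≠ some v) →
    leafLab u = leafLab v → u = v
  root_inj : ∀ u v, parent u = none → parent v = none → rootLab u = rootLab v → u = v
  unary_root : ∀ v : V, (∃! u, parent u = some v) → parent v = none

attribute [instance] MForest.finV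

/-- Isomorphism of merging forests: a bijection of the nodes commuting with `parent` and
preserving the leaf labels, the leaf tuples and the root labels. -/
def MFIso {Qp Qm χ : Type} {ℓ : ℕ} (F G : MForest Qp Qm χ ℓ) : Prop :=
  ∃ e : F.V ≃ G.V,
    (∀ v, G.parent (e v) = Option.map e (F.parent v)) ∧
    (∀ v, (∀ u, F.parent u ≠ some v) →
      F.leafLab v = G.leafLab (e v) ∧ ∀ c, F.tup v c = G.tup (e v) c) ∧
    (∀ v, F.parent v = none → F.rootLab v = G.rootLab (e v))

end Paper

namespace Paper

/-!
Every non-leaf has a child and every inner node at least two, so counting the non-roots by their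
parents gives `#inner + #roots ≤ #leaves ≤ |Q⁻|`. This bounds the nodes by `2|Q⁻|`, and since
a nonempty forest has a root, fewer than `|Q⁻|` inner nodes occur. So leaves can be named by their
labels, inner nodes by numbers below `|Q⁻| - 1`, and the remaining roots by their labels. Up to
isomorphism, the forest is determined by its leaf tuples and by the map sending each of the
`2|Q⁻| - 1` possible names of leaves and inner nodes to one of `2n - 1` values: a root label
(for a root), the name of the parent, or the name itself if no node bears it.
-/

theorem injective_comp_quot_out {α β : Type*} {r : α → α → Prop} {f : α → β}
    (hf : ∀ a b, f a = f b → r a b) : Function.Injective fun x : Quot r => f x.out := by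
  intro x y hxy
  rw [← Quot.out_eq x, ← Quot.out_eq y]
  exact Quot.sound (hf _ _ hxy)

namespace MForest

variable {Qp Qm χ ι : Type} {ℓ : ℕ} (F : MForest Qp Qm χ ℓ)

/-- A leaf is a node without children; an isolated root is a leaf as well. -/
def IsLeaf (v : F.V) : Prop := ∀ u, F.parent u ≠ some v

/-- An inner node is a node that is neither a leaf nor a root. -/
def IsInner (v : F.V) : Prop := ¬ F.IsLeaf v ∧ F.parent v ≠ none

variable {F} in
theorem not_isLeaf_iff {v : F.V} : ¬ F.IsLeaf v ↔ ∃ u, F.parent u = some v := by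
  simp [IsLeaf]

theorem parent_ne_self (v : F.V) : F.parent v ≠ some v :=
  fun h => F.acyc v (.single h)

theorem exists_parent_eq_none [Nonempty F.V] : ∃ v, F.parent v = none := by
  let r : F.V → F.V → Prop := fun b a => Relation.TransGen (fun a b => F.parent a = some b) a b
  have : IsTrans F.V r := ⟨fun _ _ _ h₁ h₂ => h₂.trans h₁⟩
  have : Std.Irrefl r := ⟨F.acyc⟩
  obtain ⟨v, -, hv⟩ := (Finite.wellFounded_of_trans_of_irrefl r).has_min Set.univ Set.univ_nonempty
  exact ⟨v, Option.eq_none_iff_forall_ne_some.2 fun u hu => hv u trivial (.single hu)⟩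

section Counting

open Finset

open Classical in
/-- The finset of leaves, used for counting. -/
noncomputable def leaves : Finset F.V := {v | F.IsLeaf v}

open Classical in
/-- The finset of inner nodes, used for counting. -/
noncomputable def innerNodes : Finset F.V := {v | F.IsInner v}

open Classical in
/-- The finset of roots, used for counting. -/
noncomputable def roots : Finset F.V := {v | F.parent v = none}

open Classical in
/-- The finset of children of a node, used for counting. -/
noncomputable def children (v : F.V) : Finset F.V := {u | F.parent u = some v}

variable {F} {v : F.V}

@[simp]
theorem mem_leaves : v ∈ F.leaves ↔ F.IsLeaf v := by
  simp [leaves]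

@[simp]
theorem mem_innerNodes : v ∈ F.innerNodes ↔ F.IsInner v := by
  simp [innerNodes]

@[simp]
theorem mem_roots : v ∈ F.roots ↔ F.parent v = none := by
  simp [roots]

@[simp]
theorem mem_children {u : F.V} : u ∈ F.children v ↔ F.parent u = some v := by
  simp [children]

theorem card_children_pos (hv : ¬ F.IsLeaf v) : 0 < #(F.children v) := by
  obtain ⟨u, hu⟩ := not_isLeaf_iff.1 hv
  exact card_pos.2 ⟨u, mem_children.2 hu⟩

theorem IsInner.one_lt_card_children (hv : F.IsInner v) : 1 < #(F.children v) := by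
  refine lt_of_le_of_ne (card_children_pos hv.1) fun hcard => hv.2 (F.unary_root v ?_)
  obtain ⟨u, hu⟩ := card_eq_one.1 hcard.symm
  exact ⟨u, by simp [← mem_children, hu]⟩

variable (F)

theorem card_roots_add_sum_card_children :
    #F.roots + ∑ v, #(F.children v) = Fintype.card F.V := by
  classical
  rw [← card_univ, card_eq_sum_card_fiberwise (s := univ) (f := F.parent) (t := univ) (by simp),
    Fintype.sum_option]
  congr!

open Classical in
theorem one_add_isInner_le_card_children_add_isLeaf (v : F.V) :
    1 + (if F.IsInner v then 1 else 0) ≤ #(F.children v) + if F.IsLeaf v then 1 else 0 := by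
  by_cases hleaf : F.IsLeaf v
  · simp [hleaf, IsInner]
  · have hpos := card_children_pos hleaf
    by_cases hinner : F.IsInner v
    · simpa [hleaf, hinner, ← Nat.succ_le_iff] using hinner.one_lt_card_children
    · simpa [hleaf, hinner] using hpos

theorem card_innerNodes_add_card_roots_le_card_leaves :
    #F.innerNodes + #F.roots ≤ #F.leaves := by
  have hsum : Fintype.card F.V + #F.innerNodes ≤ ∑ v, #(F.children v) + #F.leaves := by
    simpa [sum_add_distrib, innerNodes, leaves] using
      sum_le_sum fun v (_ : v ∈ univ) => F.one_add_isInner_le_card_children_add_isLeaf v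
  have := F.card_roots_add_sum_card_children
  lia

theorem card_le_two_mul_card_leaves : Fintype.card F.V ≤ 2 * #F.leaves := by
  classical
  have hcover : univ ⊆ F.leaves ∪ (F.innerNodes ∪ F.roots) := fun v _ => by
    simp only [mem_union, mem_leaves, mem_innerNodes, mem_roots, IsInner]
    tauto
  calc Fintype.card F.V
    _ ≤ #F.leaves + (#F.innerNodes + #F.roots) := by
      rw [← card_univ]
      grw [hcover, card_union_le, card_union_le]
    _ ≤ 2 * #F.leaves := by
      grw [card_innerNodes_add_card_roots_le_card_leaves, two_mul]

variable [Fintype Qm]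

theorem card_leaves_le : #F.leaves ≤ Fintype.card Qm :=
  card_le_card_of_injOn F.leafLab (by simp) fun u hu v hv =>
    F.leaf_inj u v (mem_leaves.1 hu) (mem_leaves.1 hv)

theorem card_le : Nat.card F.V ≤ 2 * Fintype.card Qm := by
  rw [Nat.card_eq_fintype_card]
  grw [card_le_two_mul_card_leaves, card_leaves_le]

theorem card_innerNodes_le : #F.innerNodes ≤ Fintype.card Qm - 1 := by
  rcases isEmpty_or_nonempty F.V with _ | _
  · simp [eq_empty_of_isEmpty]
  · obtain ⟨v, hv⟩ := F.exists_parent_eq_none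
    have hroots : 0 < #F.roots := card_pos.2 ⟨v, mem_roots.2 hv⟩
    have := F.card_innerNodes_add_card_roots_le_card_leaves.trans F.card_leaves_le
    lia

theorem nonempty_innerNodes_embedding :
    Nonempty ({v // F.IsInner v} ↪ Fin (Fintype.card Qm - 1)) := by
  classical
  apply Function.Embedding.nonempty_of_card_le
  rw [Fintype.card_fin, Fintype.card_of_subtype F.innerNodes fun _ => mem_innerNodes]
  exact F.card_innerNodes_le

end Counting

/-- The names available for the nodes of a merging forest when `ι` indexes the inner nodes:
labels of leaves, indices of inner nodes and, as the right summand, labels of non-leaf roots. -/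
abbrev NodeName (Qp Qm ι : Type) : Type := (Qm ⊕ ι) ⊕ Qp

section Naming

variable (f : {v // F.IsInner v} ↪ ι)

open Classical in
/-- The canonical name of a node, given an indexing `f` of the inner nodes. -/
noncomputable def name (v : F.V) : NodeName Qp Qm ι :=
  if hleaf : F.IsLeaf v then .inl (.inl (F.leafLab v))
  else if hroot : F.parent v = none then .inr (F.rootLab v)
  else .inl (.inr (f ⟨v, hleaf, hroot⟩))

theorem name_injective : Function.Injective (F.name f) := by
  intro u v huv
  unfold name at huv
  split_ifs at huv with hu hv hv hu' hv' hv' hv <;>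
    simp only [Sum.inl.injEq, Sum.inr.injEq, reduceCtorEq, EmbeddingLike.apply_eq_iff_eq] at huv
  · exact F.leaf_inj u v hu hv huv
  · exact F.root_inj u v hu' hv' huv
  · exact congrArg Subtype.val huv

variable {F f}

theorem name_eq_inl_inl_iff {v : F.V} {q : Qm} :
    F.name f v = .inl (.inl q) ↔ F.IsLeaf v ∧ F.leafLab v = q := by
  unfold name
  split_ifs <;> simp_all

theorem name_eq_inr_iff {v : F.V} {q : Qp} :
    F.name f v = .inr q ↔ ¬ F.IsLeaf v ∧ F.parent v = none ∧ F.rootLab v = q := by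
  unfold name
  split_ifs <;> simp_all

variable (F f)

/-- What the code of a forest records at the node `v`: the label of a root, or the name of the
parent of `v`. -/
noncomputable def parentName (v : F.V) : Qp ⊕ NodeName Qp Qm ι :=
  (F.parent v).elim (.inl (F.rootLab v)) fun u => .inr (F.name f u)

/-- The code of the shape of a forest: it maps the names of leaves and inner nodes to the
corresponding `parentName`. Acyclicity leaves the value `.inr (.inl κ)` at `κ` free to mark the
names that are not in use. Non-leaf roots need no entry, since they occur as parents. -/
noncomputable def parentCode (κ : Qm ⊕ ι) : Qp ⊕ NodeName Qp Qm ι :=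
  Function.extend (F.name f) (F.parentName f) .inr (.inl κ)

variable {F f}

theorem parentName_eq_inl_iff {v : F.V} {q : Qp} :
    F.parentName f v = .inl q ↔ F.parent v = none ∧ F.rootLab v = q := by
  cases h : F.parent v <;> simp [parentName, h]

theorem parentName_eq_inr_iff {v : F.V} {x : NodeName Qp Qm ι} :
    F.parentName f v = .inr x ↔ ∃ u, F.parent v = some u ∧ F.name f u = x := by
  cases h : F.parent v <;> simp [parentName, h]

theorem parentName_of_name_eq_inr {v : F.V} {q : Qp} (hv : F.name f v = .inr q) :
    F.parentName f v = .inl q :=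
  parentName_eq_inl_iff.2 (name_eq_inr_iff.1 hv).2

theorem parentCode_of_name_eq_inl {v : F.V} {κ : Qm ⊕ ι} (hv : F.name f v = .inl κ) :
    F.parentCode f κ = F.parentName f v := by
  rw [parentCode, ← hv, (F.name_injective f).extend_apply]

theorem inl_mem_range_name_iff {κ : Qm ⊕ ι} :
    .inl κ ∈ Set.range (F.name f) ↔ F.parentCode f κ ≠ .inr (.inl κ) := by
  constructor
  · rintro ⟨v, hv⟩ hloop
    rw [parentCode_of_name_eq_inl hv, ← hv, parentName_eq_inr_iff] at hloop
    obtain ⟨u, hu, huv⟩ := hloop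
    exact F.parent_ne_self v (F.name_injective f huv ▸ hu)
  · contrapose!
    exact Function.extend_apply' _ _ _

theorem inr_mem_range_name_iff {q : Qp} :
    .inr q ∈ Set.range (F.name f) ↔ ∃ κ, F.parentCode f κ = .inr (.inr q) := by
  constructor
  · rintro ⟨v, hv⟩
    obtain ⟨u, hu⟩ := not_isLeaf_iff.1 (name_eq_inr_iff.1 hv).1
    have hparent : F.parentName f u = .inr (.inr q) := parentName_eq_inr_iff.2 ⟨v, hu, hv⟩
    cases hname : F.name f u with
    | inl κ => exact ⟨κ, (parentCode_of_name_eq_inl hname).trans hparent⟩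
    | inr r => simp [parentName_of_name_eq_inr hname] at hparent
  · rintro ⟨κ, hκ⟩
    obtain ⟨v, hv⟩ : .inl κ ∈ Set.range (F.name f) := inl_mem_range_name_iff.2 (by simp [hκ])
    rw [parentCode_of_name_eq_inl hv, parentName_eq_inr_iff] at hκ
    obtain ⟨u, -, hu⟩ := hκ
    exact ⟨u, hu⟩

end Naming

section TupleCode

variable [NeZero ℓ]

/-- The tuples of the leaves, indexed by leaf labels and extended by zero to unused labels. -/
noncomputable def tupleCode : Qm → χ → Fin ℓ :=
  Function.extend (fun v : {v // F.IsLeaf v} => F.leafLab v)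
    (fun v c => ⟨F.tup v c, F.tup_lt v v.2 c⟩) 0

variable {F} in
theorem tupleCode_leafLab {v : F.V} (hv : F.IsLeaf v) (c : χ) :
    (F.tupleCode (F.leafLab v) c : ℕ) = F.tup v c := by
  have hinj : Function.Injective fun v : {v // F.IsLeaf v} => F.leafLab v :=
    fun u v huv => Subtype.ext (F.leaf_inj u v u.2 v.2 huv)
  rw [tupleCode, hinj.extend_apply _ _ ⟨v, hv⟩]

end TupleCode

section Iso

variable {F} {G : MForest Qp Qm χ ℓ} {f : {v // F.IsInner v} ↪ ι} {g : {v // G.IsInner v} ↪ ι}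

theorem range_name_eq_of_parentCode_eq (h : F.parentCode f = G.parentCode g) :
    Set.range (F.name f) = Set.range (G.name g) := by
  ext (κ | q)
  · rw [inl_mem_range_name_iff, inl_mem_range_name_iff, h]
  · rw [inr_mem_range_name_iff, inr_mem_range_name_iff, h]

theorem exists_equiv_name_eq (h : Set.range (F.name f) = Set.range (G.name g)) :
    ∃ e : F.V ≃ G.V, ∀ v, G.name g (e v) = F.name f v := by
  refine ⟨(Equiv.ofInjective _ (F.name_injective f)).trans <| (Equiv.setCongr h).trans
    (Equiv.ofInjective _ (G.name_injective g)).symm, fun v => ?_⟩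
  simp [Equiv.apply_ofInjective_symm]

theorem parentName_eq_of_name_eq (h : F.parentCode f = G.parentCode g) {v : F.V} {w : G.V}
    (hvw : G.name g w = F.name f v) : G.parentName g w = F.parentName f v := by
  cases hv : F.name f v with
  | inl κ =>
    rw [← parentCode_of_name_eq_inl hv, h, ← parentCode_of_name_eq_inl (hvw.trans hv)]
  | inr q => rw [parentName_of_name_eq_inr hv, parentName_of_name_eq_inr (hvw.trans hv)]

theorem mfIso_of_codes_eq [NeZero ℓ] (hparent : F.parentCode f = G.parentCode g)
    (htuple : F.tupleCode = G.tupleCode) : MFIso F G := by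
  obtain ⟨e, he⟩ := exists_equiv_name_eq (range_name_eq_of_parentCode_eq hparent)
  have hname (v : F.V) := parentName_eq_of_name_eq hparent (he v)
  refine ⟨e, fun v => ?_, fun v hv => ?_, fun v hv => ?_⟩
  · cases hv : F.parent v with
    | none =>
      exact (parentName_eq_inl_iff.1 ((hname v).trans (parentName_eq_inl_iff.2 ⟨hv, rfl⟩))).1
    | some u =>
      obtain ⟨w, hw, hwu⟩ := parentName_eq_inr_iff.1
        ((hname v).trans (parentName_eq_inr_iff.2 ⟨u, hv, rfl⟩))
      rw [hw, Option.map_some, G.name_injective g (hwu.trans (he u).symm)]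
  · obtain ⟨hleaf, hlab⟩ := name_eq_inl_inl_iff.1
      ((he v).trans (name_eq_inl_inl_iff.2 ⟨hv, rfl⟩))
    refine ⟨hlab.symm, fun c => ?_⟩
    rw [← tupleCode_leafLab hv, ← tupleCode_leafLab hleaf, htuple, hlab]
  · exact (parentName_eq_inl_iff.1 ((hname v).trans (parentName_eq_inl_iff.2 ⟨hv, rfl⟩))).2.symm

end Iso

variable (Qp Qm χ ℓ)

theorem exists_injective_code [Fintype Qm] [NeZero ℓ] :
    ∃ code : Quot (@MFIso Qp Qm χ ℓ) →
      (Qm ⊕ Fin (Fintype.card Qm - 1) → Qp ⊕ NodeName Qp Qm (Fin (Fintype.card Qm - 1))) ×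
        (Qm → χ → Fin ℓ),
      Function.Injective code := by
  let f (F : MForest Qp Qm χ ℓ) := F.nonempty_innerNodes_embedding.some
  refine ⟨_, injective_comp_quot_out (f := fun F => (F.parentCode (f F), F.tupleCode)) ?_⟩
  intro F G h
  exact mfIso_of_codes_eq (Prod.ext_iff.1 h).1 (Prod.ext_iff.1 h).2

theorem finite_quot_mfIso [Finite Qp] [Finite Qm] [Finite χ] [NeZero ℓ] :
    Finite (Quot (@MFIso Qp Qm χ ℓ)) :=
  have := Fintype.ofFinite Qm
  have ⟨_, hcode⟩ := exists_injective_code Qp Qm χ ℓ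
  .of_injective _ hcode

theorem card_quot_mfIso_le [Fintype Qp] [Fintype Qm] [Fintype χ] [NeZero ℓ] :
    Nat.card (Quot (@MFIso Qp Qm χ ℓ)) ≤ ℓ ^ (Fintype.card χ * Fintype.card Qm) *
      (2 * (Fintype.card Qp + Fintype.card Qm) - 1) ^ (2 * Fintype.card Qm - 1) := by
  classical
  obtain ⟨code, hcode⟩ := exists_injective_code Qp Qm χ ℓ
  refine (Nat.card_le_card_of_injective code hcode).trans_eq ?_
  simp only [Nat.card_eq_fintype_card, Fintype.card_prod, Fintype.card_fun, Fintype.card_sum,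
    Fintype.card_fin, ← pow_mul, mul_comm (ℓ ^ _)]
  rcases (Fintype.card Qm).eq_zero_or_pos with hm | hm
  · simp [hm]
  · congr 2 <;> lia

end MForest

/-- Let `Q = Q⁺ ⊎ Q⁻` have size `n > 0` with `Q⁺ ≠ ∅`, let `χ` have size
`k` and let `ℓ > 0`.  Every merging forest on `(Q, χ, ℓ)` has at most `2n-2` nodes and at
most `2n-2` edges, and the number of merging forests on `(Q, χ, ℓ)` (counted up to
isomorphism) is finite and at most `ℓ^(k(n-1))·(2n-1)^(2n-3)`, the bound being read in the
nonnegative reals (the exponent `2n-3` being an integer). -/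
theorem merging_forest_count (Qp Qm χ : Type) [Fintype Qp] [Fintype Qm] [Fintype χ]
    (n k ℓ : ℕ) (hn : 0 < n)
    (hcard : Fintype.card Qp + Fintype.card Qm = n)
    (hQp : Nonempty Qp) (hk : Fintype.card χ = k) (hl : 0 < ℓ) :
    (∀ F : MForest Qp Qm χ ℓ,
        Nat.card F.V ≤ 2 * n - 2 ∧
        Nat.card {v : F.V // F.parent v ≠ none} ≤ 2 * n - 2) ∧
    Finite (Quot (@MFIso Qp Qm χ ℓ)) ∧
    (Nat.card (Quot (@MFIso Qp Qm χ ℓ)) : NNReal) ≤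
      (ℓ : NNReal) ^ (k * (n - 1)) * ((2 * n - 1 : ℕ) : NNReal) ^ (2 * (n : ℤ) - 3) := by
  have hp : 0 < Fintype.card Qp := Fintype.card_pos
  have : NeZero ℓ := ⟨hl.ne'⟩
  refine ⟨fun F => ?_, MForest.finite_quot_mfIso Qp Qm χ ℓ, ?_⟩
  · have hnodes : Nat.card F.V ≤ 2 * n - 2 := F.card_le.trans (by lia)
    exact ⟨hnodes, (Finite.card_subtype_le _).trans hnodes⟩
  · calc (Nat.card (Quot (@MFIso Qp Qm χ ℓ)) : NNReal)
      _ ≤ (ℓ : NNReal) ^ (k * Fintype.card Qm) *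
          ((2 * n - 1 : ℕ) : NNReal) ^ (2 * Fintype.card Qm - 1) := by
        rw [← hk, ← hcard]
        exact_mod_cast MForest.card_quot_mfIso_le Qp Qm χ ℓ
      _ ≤ _ := by
        gcongr ?_ * ?_
        · exact pow_le_pow_right₀ (mod_cast hl) (by gcongr; lia)
        · obtain rfl | hn1 := eq_or_ne n 1
          · simp
          · rw [← zpow_natCast]
            exact zpow_le_zpow_right₀ (mod_cast (by lia)) (by lia)

end Paper
end

section
/- Let T be a reversible two-way Büchi transducer with n states. Then there exists a reversible two-way transducer S with no acceptance condition and at most 3n states such that ⟦S⟧ = ⟦T⟧ as partial functions from A^ω to B^ω. -/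
namespace Paper

/-!
A Büchi condition can be checked by looking ahead: before emitting the output of a block of
transitions of `T` that ends with an accepting one, the transducer first searches for that
accepting transition without emitting anything, then rewinds to the beginning of the block, and
only then replays the block while emitting its output. Rewinding is possible without memory because
`T` is codeterministic, and the beginning of the block is recognised as the place where the
transition to be undone is accepting, or as the initial configuration. If only finitely many
accepting transitions are met, then the search for the next one goes on forever, or gets stuck, and
the output is finite.

The one obstruction is a run that returns to its initial configuration, where rewinding would be
ambiguous. Such a run is periodic, so it does not read the whole word, and the transitions that
read `⊢` and enter the initial state can be dropped beforehand.
-/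

section Scan

/-- The phase of the look-ahead: `search` for an accepting transition, `rewind` to the beginning of
the current block, `emit` the output of the block. It is the component that triples the state
space. -/
inductive ScanMode
  | search
  | rewind
  | emit
  deriving DecidableEq

instance : Fintype ScanMode where
  elems := {.search, .rewind, .emit}
  complete m := by cases m <;> decide

/-- A state of the look-ahead along a run of the Büchi transducer: the index `pos` of the
configuration being simulated, the phase, and the number `emitted` of transitions whose output has
been produced. -/
structure ScanState where
  pos : ℕ
  mode : ScanMode
  emitted : ℕ

/-- One step of the look-ahead, where `P i` says that the `i`-th transition is accepting. The field
`emitted` is a ghost: it does not influence the other two. -/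
def scanStep (P : ℕ → Prop) [DecidablePred P] : ScanState → ScanState
  | ⟨k, .search, n⟩ => if P k then ⟨k, .rewind, n⟩ else ⟨k + 1, .search, n⟩
  | ⟨0, .rewind, n⟩ => ⟨0, .emit, n⟩
  | ⟨k + 1, .rewind, n⟩ => if P k then ⟨k + 1, .emit, n⟩ else ⟨k, .rewind, n⟩
  | ⟨k, .emit, n⟩ => if P k then ⟨k + 1, .search, n + 1⟩ else ⟨k + 1, .emit, n + 1⟩

/-- The state of the look-ahead after `j` steps. -/
def scan (P : ℕ → Prop) [DecidablePred P] (j : ℕ) : ScanState :=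
  (scanStep P)^[j] ⟨0, .search, 0⟩

/-- The output of the look-ahead in a given state, where `g i` is the output of the `i`-th
transition. -/
def scanOutput {C : Type} (g : ℕ → List C) : ScanState → List C
  | ⟨k, .emit, _⟩ => g k
  | _ => []

/-- The invariant of the look-ahead. Outside the phase `emit`, the number `emitted` is also the
beginning of the current block. -/
structure ScanInvariant (P : ℕ → Prop) (s : ScanState) : Prop where
  emitted_le : s.emitted ≤ s.pos
  not_of_le_of_lt : ∀ i, s.emitted ≤ i → i < s.pos → ¬ P i
  block_start : s.mode ≠ .emit → ∀ i, s.emitted = i + 1 → P i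
  emitted_eq : s.mode = .emit → s.emitted = s.pos
  exists_ge : s.mode ≠ .search → ∃ i, s.pos ≤ i ∧ P i

variable {P : ℕ → Prop}

lemma ScanInvariant.exists_ge_of_lt_emitted {s : ScanState} (hs : ScanInvariant P s) {n : ℕ}
    (hn : n < s.emitted) : ∃ i, n ≤ i ∧ P i := by
  obtain ⟨hle, -, hstart, -, hex⟩ := hs
  by_cases hmode : s.mode = .emit
  · obtain ⟨i, hi, hPi⟩ := hex (by simp [hmode])
    exact ⟨i, by omega, hPi⟩
  · exact ⟨s.emitted - 1, by omega, hstart hmode _ (by omega)⟩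

variable [DecidablePred P]

lemma scan_succ (j : ℕ) : scan P (j + 1) = scanStep P (scan P j) :=
  Function.iterate_succ_apply' _ _ _

lemma scan_add (d j : ℕ) : scan P (d + j) = (scanStep P)^[d] (scan P j) :=
  Function.iterate_add_apply _ _ _ _

lemma lt_pos_or_eq_of_lt_scanStep_pos {s : ScanState} {i : ℕ} (hi : i < (scanStep P s).pos) :
    i < s.pos ∨ i = s.pos ∧ s.mode ≠ .rewind := by
  fun_cases scanStep P s <;> grind [scanStep]

lemma ScanInvariant.scanStep {s : ScanState} (hs : ScanInvariant P s) :
    ScanInvariant P (scanStep P s) := by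
  obtain ⟨hle, hnot, hstart, heq, hex⟩ := hs
  fun_cases Paper.scanStep P s <;> constructor <;> grind

lemma scanInvariant_scan (j : ℕ) : ScanInvariant P (scan P j) := by
  induction j with
  | zero => constructor <;> simp [scan]
  | succ j ih => exact scan_succ (P := P) j ▸ ih.scanStep

lemma scanStep_iterate_search {k d : ℕ} (n : ℕ) (h : ∀ i, k ≤ i → i < k + d → ¬ P i) :
    (scanStep P)^[d] ⟨k, .search, n⟩ = ⟨k + d, .search, n⟩ := by
  induction d with
  | zero => rfl
  | succ d ih =>
    rw [Function.iterate_succ_apply', ih fun i hki hid => h i hki (by omega), scanStep,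
      if_neg (h _ (by omega) (by omega)), add_assoc]

lemma scanStep_iterate_rewind {k d : ℕ} (n : ℕ) (h : ∀ i, k ≤ i → i < k + d → ¬ P i) :
    (scanStep P)^[d] ⟨k + d, .rewind, n⟩ = ⟨k, .rewind, n⟩ := by
  induction d with
  | zero => rfl
  | succ d ih =>
    rw [Function.iterate_succ_apply, ← add_assoc, scanStep, if_neg (h _ (by omega) (by omega)),
      ih fun i hki hid => h i hki (by omega)]

lemma scanStep_rewind_of_block_start {k : ℕ} (n : ℕ) (h : ∀ i, k = i + 1 → P i) :
    scanStep P ⟨k, .rewind, n⟩ = ⟨k, .emit, n⟩ := by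
  cases k with
  | zero => rfl
  | succ k => rw [scanStep, if_pos (h k rfl)]

lemma exists_scanStep_iterate_eq_emit {k : ℕ} (n : ℕ) (hstart : ∀ i, k = i + 1 → P i)
    (hex : ∃ i, k ≤ i ∧ P i) : ∃ j, (scanStep P)^[j] ⟨k, .search, n⟩ = ⟨k, .emit, n⟩ := by
  have hex' : ∃ d, P (k + d) := by
    obtain ⟨i, hki, hPi⟩ := hex
    exact ⟨i - k, by rwa [Nat.add_sub_cancel' hki]⟩
  set d := Nat.find hex'
  have hblock : ∀ i, k ≤ i → i < k + d → ¬ P i := fun i hki hid hPi =>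
    Nat.find_min hex' (m := i - k) (by omega) (by rwa [Nat.add_sub_cancel' hki])
  refine ⟨1 + (d + (1 + d)), ?_⟩
  rw [Function.iterate_add_apply, Function.iterate_add_apply, Function.iterate_add_apply,
    scanStep_iterate_search n hblock, Function.iterate_one, scanStep,
    if_pos (Nat.find_spec hex'), scanStep_iterate_rewind n hblock,
    scanStep_rewind_of_block_start n hstart]

lemma exists_scan_eq_emit (hP : ∀ n, ∃ i, n ≤ i ∧ P i) (n : ℕ) :
    ∃ j, scan P j = ⟨n, .emit, n⟩ := by
  induction n with
  | zero => exact exists_scanStep_iterate_eq_emit 0 (by simp) (hP 0)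
  | succ n ih =>
    obtain ⟨j, hj⟩ := ih
    by_cases hPn : P n
    · obtain ⟨d, hd⟩ := exists_scanStep_iterate_eq_emit (n + 1)
        (fun i hi => Nat.succ.inj hi ▸ hPn) (hP (n + 1))
      exact ⟨d + (j + 1), by rw [scan_add, scan_succ, hj, scanStep, if_pos hPn, hd]⟩
    · exact ⟨j + 1, by rw [scan_succ, hj, scanStep, if_neg hPn]⟩

variable {C : Type}

lemma monotone_length_prefixCat (f : ℕ → List C) : Monotone fun n => (prefixCat f n).length :=
  monotone_nat_of_le_succ fun n => by simp [prefixCat]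

lemma prefixCat_append_scanOutput (g : ℕ → List C) {s : ScanState} (hs : ScanInvariant P s) :
    prefixCat g s.emitted ++ scanOutput g s = prefixCat g (scanStep P s).emitted := by
  have heq := hs.emitted_eq
  fun_cases scanStep P s <;> simp_all [scanOutput, prefixCat]

lemma prefixCat_scanOutput (g : ℕ → List C) (j : ℕ) :
    prefixCat (fun j => scanOutput g (scan P j)) j = prefixCat g (scan P j).emitted := by
  induction j with
  | zero => rfl
  | succ j ih =>
    rw [prefixCat, ih, scan_succ, prefixCat_append_scanOutput g (scanInvariant_scan j)]

theorem flattenTo_scanOutput_iff (g : ℕ → List C) (x : ℕ → C) :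
    FlattenTo (fun j => scanOutput g (scan P j)) x ↔
      (∀ n, ∃ i, n ≤ i ∧ P i) ∧ FlattenTo g x := by
  simp only [FlattenTo, prefixCat_scanOutput]
  constructor
  · rintro ⟨hpre, hlength⟩
    have hP : ∀ n, ∃ i, n ≤ i ∧ P i := fun n => by
      obtain ⟨j, hj⟩ := hlength ((prefixCat g n).length + 1)
      exact (scanInvariant_scan j).exists_ge_of_lt_emitted
        ((monotone_length_prefixCat g).reflect_lt hj)
    refine ⟨hP, fun n => ?_, fun m => (hlength m).imp' _ fun _ => id⟩
    obtain ⟨j, hj⟩ := exists_scan_eq_emit hP n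
    simpa only [hj] using hpre j
  · rintro ⟨hP, hpre, hlength⟩
    refine ⟨fun j => hpre _, fun m => ?_⟩
    obtain ⟨n, hn⟩ := hlength m
    obtain ⟨j, hj⟩ := exists_scan_eq_emit hP n
    exact ⟨j, by rwa [hj]⟩

end Scan

section Cells

variable {A : Type}

/-- The content of the cells of the tape `⊢ w`: cell `0` holds `⊢` and cell `k + 1` holds `w k`, so
that a head at position `i` stands between the cells `i` and `i + 1`. -/
def tapeCell (w : ℕ → A) : ℕ → Option A
  | 0 => none
  | k + 1 => some (w k)

open Classical in
/-- The cell in front of the head, which is the one read by the next transition. -/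
noncomputable def frontCell (M : TwoWayAut A) (c : M.Q × ℕ) : ℕ :=
  if M.fwd c.1 then c.2 + 1 else c.2

open Classical in
/-- The cell behind the head, which is the one read by the previous transition. -/
noncomputable def backCell (M : TwoWayAut A) (c : M.Q × ℕ) : ℕ :=
  if M.fwd c.1 then c.2 else c.2 + 1

variable {M : TwoWayAut A} {w : ℕ → A} {c c' : M.Q × ℕ} {t : M.Q × Option A × M.Q}

/-- In this form a step is symmetric under exchanging `c` and `c'` together with front and back,
which is what makes rewinding work. -/
theorem stepVia_iff :
    StepVia M w c t c' ↔
      t ∈ M.Δ ∧ t = (c.1, tapeCell w (frontCell M c), c'.1) ∧ frontCell M c = backCell M c' := by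
  obtain ⟨p, a, q⟩ := t
  obtain ⟨p', i⟩ := c
  obtain ⟨q', i'⟩ := c'
  have hmarker := M.marker p q
  by_cases hp : M.fwd p' <;> by_cases hq : M.fwd q' <;> cases i <;>
    simp only [StepVia, frontCell, backCell, hp, hq, tapeCell] <;> grind

lemma eq_of_backCell_eq (hstate : c.1 = c'.1) (hcell : backCell M c = backCell M c') : c = c' := by
  obtain ⟨q, i⟩ := c
  obtain ⟨q', i'⟩ := c'
  obtain rfl : q = q' := hstate
  by_cases hq : M.fwd q <;> simp_all [backCell]

lemma StepVia.unique (hM : Deterministic M) {c₁ c₂ : M.Q × ℕ} {t₁ t₂ : M.Q × Option A × M.Q}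
    (h₁ : StepVia M w c t₁ c₁) (h₂ : StepVia M w c t₂ c₂) : t₁ = t₂ ∧ c₁ = c₂ := by
  obtain ⟨hΔ₁, rfl, hcell₁⟩ := stepVia_iff.1 h₁
  obtain ⟨hΔ₂, rfl, hcell₂⟩ := stepVia_iff.1 h₂
  have hstate : c₁.1 = c₂.1 := hM _ _ _ _ hΔ₁ hΔ₂
  exact ⟨by rw [hstate], eq_of_backCell_eq hstate (hcell₁.symm.trans hcell₂)⟩

lemma exists_stepVia_of_mem {q : M.Q} (h : (c.1, tapeCell w (frontCell M c), q) ∈ M.Δ) :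
    ∃ t c', StepVia M w c t c' := by
  obtain ⟨i, hi⟩ : ∃ i, frontCell M c = backCell M (q, i) := by
    by_cases hq : M.fwd q
    · exact ⟨_, (if_pos hq).symm⟩
    · cases hk : frontCell M c with
      | zero => exact absurd (M.marker _ _ (by rwa [hk] at h)).2 hq
      | succ k => exact ⟨k, (if_neg hq).symm⟩
  exact ⟨_, (q, i), stepVia_iff.2 ⟨h, rfl, hi⟩⟩

end Cells

section Runs

variable {A : Type} {M : TwoWayAut A} {w : ℕ → A} {cfg : ℕ → M.Q × ℕ}
  {tr : ℕ → M.Q × Option A × M.Q}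

lemma IsRun.periodic_of_eq_cfg_zero (hM : Deterministic M) (hrun : IsRun M w cfg tr) {n : ℕ}
    (hn : cfg n = cfg 0) : Function.Periodic cfg n := by
  intro k
  induction k with
  | zero => rwa [zero_add]
  | succ k ih =>
    have hstep := hrun.2 (k + n)
    rw [ih] at hstep
    rw [add_right_comm]
    exact (hstep.unique hM (hrun.2 k)).2

lemma not_readsWhole_of_periodic {n : ℕ} (hn : 0 < n) (hcfg : Function.Periodic cfg n) :
    ¬ ReadsWhole M cfg := by
  intro hwhole
  obtain ⟨i, hi⟩ := hwhole ((Finset.range n).sup (fun k => (cfg k).2) + 1)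
  have hle := Finset.le_sup (f := fun k => (cfg k).2) (Finset.mem_range.2 (Nat.mod_lt i hn))
  simp only [hcfg.map_mod_nat] at hle
  omega

lemma IsRun.tr_ne_marker_init (hM : Deterministic M) (hrun : IsRun M w cfg tr)
    (hwhole : ReadsWhole M cfg) (i : ℕ) : (tr i).2 ≠ (none, M.init) := by
  intro htr
  refine not_readsWhole_of_periodic i.succ_pos (hrun.periodic_of_eq_cfg_zero hM ?_) hwhole
  obtain ⟨-, -, hstate, hpos⟩ := hrun.2 i
  rw [htr] at hstate hpos
  rw [hrun.1]
  exact Prod.ext hstate.symm (by simp_all)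

/-- A run that goes on for as long as `M` can move. Both sequences are arbitrary after a
configuration without successor, so that a finite maximal run needs no separate treatment. -/
def IsMaximalRun (M : TwoWayAut A) (w : ℕ → A) (cfg : ℕ → M.Q × ℕ)
    (tr : ℕ → M.Q × Option A × M.Q) : Prop :=
  cfg 0 = (M.init, 0) ∧
    ∀ i, (∃ t c', StepVia M w (cfg i) t c') → StepVia M w (cfg i) (tr i) (cfg (i + 1))

lemma exists_isMaximalRun (M : TwoWayAut A) (w : ℕ → A) :
    ∃ cfg tr, IsMaximalRun M w cfg tr := by
  have hnext : ∀ c, ∃ t c', (∃ t c', StepVia M w c t c') → StepVia M w c t c' := fun c => by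
    by_cases hc : ∃ t c', StepVia M w c t c'
    · obtain ⟨t, c', h⟩ := hc
      exact ⟨t, c', fun _ => h⟩
    · exact ⟨(c.1, none, c.1), c, fun h => absurd h hc⟩
  choose nextTrans nextCfg hnext using hnext
  refine ⟨fun i => nextCfg^[i] (M.init, 0), fun i => nextTrans (nextCfg^[i] (M.init, 0)), rfl,
    fun i hi => ?_⟩
  simpa only [Function.iterate_succ_apply'] using hnext _ hi

end Runs

namespace BuchiTrans

variable {A B : Type} (T : BuchiTrans A B)

/-- The transducer `T` without the transitions that read `⊢` and enter the initial state. -/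
def trim : BuchiTrans A B where
  Q := T.Q
  finQ := T.finQ
  fwd := T.fwd
  init := T.init
  init_fwd := T.init_fwd
  Δ := {t ∈ T.Δ | t.2 ≠ (none, T.init)}
  marker p q h := T.marker p q h.1
  acc := T.acc
  out := T.out

variable {T} {w : ℕ → A}

lemma reversible_trim (hT : Reversible T.toTwoWayAut) : Reversible T.trim.toTwoWayAut :=
  ⟨fun p a q q' h h' => hT.1 p a q q' h.1 h'.1, fun p p' a q h h' => hT.2 p p' a q h.1 h'.1⟩

lemma not_mem_trim (p : T.trim.Q) : (p, none, T.trim.init) ∉ T.trim.Δ := fun h => h.2 rfl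

theorem trim_realizes_iff (hT : Deterministic T.toTwoWayAut) (x : ℕ → B) :
    T.trim.Realizes w x ↔ T.Realizes w x := by
  constructor
  · rintro ⟨cfg, tr, ⟨hzero, hstep⟩, hrest⟩
    exact ⟨cfg, tr, ⟨hzero, fun i => ⟨(hstep i).1.1, (hstep i).2⟩⟩, hrest⟩
  · rintro ⟨cfg, tr, hrun, hwhole, hrest⟩
    have hne := hrun.tr_ne_marker_init hT hwhole
    exact ⟨cfg, tr, ⟨hrun.1, fun i => ⟨⟨(hrun.2 i).1, hne i⟩, (hrun.2 i).2⟩⟩, hwhole, hrest⟩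

variable (T) in
/-- The transitions of the look-ahead transducer. A constructor is named after the phase it stays
in, or after what happens where the phase changes: `turn` finds the end of the block, `resume` and
`start` find its beginning, and `advance` passes to the next block. -/
inductive ScanTrans : T.Q × ScanMode → Option A → T.Q × ScanMode → Prop
  | search {p a q} (hΔ : (p, a, q) ∈ T.Δ) (hacc : (p, a, q) ∉ T.acc) :
      ScanTrans (p, .search) a (q, .search)
  | turn {p a q} (hΔ : (p, a, q) ∈ T.Δ) (hacc : (p, a, q) ∈ T.acc) :
      ScanTrans (p, .search) a (p, .rewind)
  | rewind {p a q} (hΔ : (p, a, q) ∈ T.Δ) (hacc : (p, a, q) ∉ T.acc) :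
      ScanTrans (q, .rewind) a (p, .rewind)
  | resume {p a q} (hΔ : (p, a, q) ∈ T.Δ) (hacc : (p, a, q) ∈ T.acc) :
      ScanTrans (q, .rewind) a (q, .emit)
  | start : ScanTrans (T.init, .rewind) none (T.init, .emit)
  | emit {p a q} (hΔ : (p, a, q) ∈ T.Δ) (hacc : (p, a, q) ∉ T.acc) :
      ScanTrans (p, .emit) a (q, .emit)
  | advance {p a q} (hΔ : (p, a, q) ∈ T.Δ) (hacc : (p, a, q) ∈ T.acc) :
      ScanTrans (p, .emit) a (q, .search)

lemma ScanTrans.exists_mem {s s' : T.Q × ScanMode} {a : Option A} (h : T.ScanTrans s a s')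
    (hs : s.2 ≠ .rewind) : ∃ q, (s.1, a, q) ∈ T.Δ := by
  cases h with
  | search hΔ | turn hΔ | emit hΔ | advance hΔ => exact ⟨_, hΔ⟩
  | rewind | resume | start => exact absurd rfl hs

variable (T) in
/-- The look-ahead transducer. Its states in the phase `rewind` have the direction opposite to that
of the underlying state of `T`, since they undo transitions of `T`. -/
def toNoAcc : NoAccTrans A B where
  Q := T.Q × ScanMode
  finQ := inferInstance
  fwd
    | (q, .rewind) => ¬ T.fwd q
    | (q, _) => T.fwd q
  init := (T.init, .search)
  init_fwd := T.init_fwd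
  Δ := {t | T.ScanTrans t.1 t.2.1 t.2.2}
  marker := by
    have hmarker := T.marker
    have hinit := T.init_fwd
    rintro ⟨p, m⟩ ⟨q, m'⟩ (h : T.ScanTrans (p, m) none (q, m'))
    cases h <;> grind
  out
    | ((p, .emit), a, (q, _)) => T.out (p, a, q)
    | _ => []

lemma card_toNoAcc : Fintype.card T.toNoAcc.Q = 3 * Fintype.card T.Q :=
  (Fintype.card_prod T.Q ScanMode).trans (mul_comm _ _)

lemma reversible_toNoAcc (hT : Reversible T.toTwoWayAut)
    (hinit : ∀ p, (p, none, T.init) ∉ T.Δ) : Reversible T.toNoAcc.toTwoWayAut := by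
  obtain ⟨hdet, hcodet⟩ := hT
  constructor
  · rintro p a q q' (h : T.ScanTrans p a q) (h' : T.ScanTrans p a q')
    cases h <;> cases h' <;> grind [Deterministic, Codeterministic]
  · rintro p p' a q (h : T.ScanTrans p a q) (h' : T.ScanTrans p' a q)
    cases h <;> cases h' <;> grind [Deterministic, Codeterministic]

/-- The configuration of the look-ahead transducer that represents the configuration `c` of `T` in
the phase `m`. -/
def withMode (m : ScanMode) (c : T.Q × ℕ) : T.toNoAcc.Q × ℕ :=
  ((c.1, m), c.2)

lemma frontCell_withMode {m : ScanMode} (hm : m ≠ .rewind) (c : T.Q × ℕ) :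
    frontCell T.toNoAcc.toTwoWayAut (withMode m c) = frontCell T.toTwoWayAut c := by
  cases m <;> trivial

lemma frontCell_withMode_rewind (c : T.Q × ℕ) :
    frontCell T.toNoAcc.toTwoWayAut (withMode .rewind c) = backCell T.toTwoWayAut c := by
  by_cases hfwd : T.fwd c.1 <;> simp [frontCell, backCell, withMode, toNoAcc, hfwd]

lemma backCell_withMode_rewind (c : T.Q × ℕ) :
    backCell T.toNoAcc.toTwoWayAut (withMode .rewind c) = frontCell T.toTwoWayAut c := by
  by_cases hfwd : T.fwd c.1 <;> simp [frontCell, backCell, withMode, toNoAcc, hfwd]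

lemma exists_stepVia_of_withMode {m : ScanMode} (hm : m ≠ .rewind) {c : T.Q × ℕ}
    {t : T.toNoAcc.Q × Option A × T.toNoAcc.Q} {c' : T.toNoAcc.Q × ℕ}
    (h : StepVia T.toNoAcc.toTwoWayAut w (withMode m c) t c') :
    ∃ t c', StepVia T.toTwoWayAut w c t c' := by
  obtain ⟨hΔ, rfl, -⟩ := stepVia_iff.1 h
  rw [frontCell_withMode hm] at hΔ
  obtain ⟨q, hq⟩ := ScanTrans.exists_mem hΔ hm
  exact exists_stepVia_of_mem hq

end BuchiTrans

/-- The transducer `S` can move from `c` to `c'` while emitting the word `l`. -/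
def NoAccTrans.StepEmits {A B : Type} (S : NoAccTrans A B) (w : ℕ → A) (c : S.Q × ℕ) (l : List B)
    (c' : S.Q × ℕ) : Prop :=
  ∃ t, StepVia S.toTwoWayAut w c t c' ∧ S.out t = l

lemma NoAccTrans.StepEmits.unique {A B : Type} {S : NoAccTrans A B}
    (hS : Deterministic S.toTwoWayAut) {w : ℕ → A} {c c₁ c₂ : S.Q × ℕ} {l : List B}
    {t : S.Q × Option A × S.Q} (h₁ : S.StepEmits w c l c₁)
    (h₂ : StepVia S.toTwoWayAut w c t c₂) : c₁ = c₂ ∧ l = S.out t := by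
  obtain ⟨t₁, h₁, rfl⟩ := h₁
  obtain ⟨rfl, rfl⟩ := h₁.unique hS h₂
  exact ⟨rfl, rfl⟩

namespace BuchiTrans

variable {A B : Type} {T : BuchiTrans A B} {w : ℕ → A}

section Steps

variable {c c' : T.Q × ℕ} {t : T.Q × Option A × T.Q}

lemma stepEmits_search (h : StepVia T.toTwoWayAut w c t c') (hacc : t ∉ T.acc) :
    T.toNoAcc.StepEmits w (withMode .search c) [] (withMode .search c') := by
  obtain ⟨hΔ, rfl, hcell⟩ := stepVia_iff.1 h
  exact ⟨_, stepVia_iff.2 ⟨.search hΔ hacc, rfl, hcell⟩, rfl⟩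

lemma stepEmits_turn (h : StepVia T.toTwoWayAut w c t c') (hacc : t ∈ T.acc) :
    T.toNoAcc.StepEmits w (withMode .search c) [] (withMode .rewind c) := by
  obtain ⟨hΔ, rfl, -⟩ := stepVia_iff.1 h
  exact ⟨_, stepVia_iff.2 ⟨.turn hΔ hacc, rfl, (backCell_withMode_rewind c).symm⟩, rfl⟩

lemma stepEmits_rewind (h : StepVia T.toTwoWayAut w c t c') (hacc : t ∉ T.acc) :
    T.toNoAcc.StepEmits w (withMode .rewind c') [] (withMode .rewind c) := by
  obtain ⟨hΔ, rfl, hcell⟩ := stepVia_iff.1 h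
  rw [hcell, ← frontCell_withMode_rewind] at hΔ hacc
  refine ⟨_, stepVia_iff.2 ⟨.rewind hΔ hacc, rfl, ?_⟩, rfl⟩
  rw [frontCell_withMode_rewind, backCell_withMode_rewind, hcell]

lemma stepEmits_resume (h : StepVia T.toTwoWayAut w c t c') (hacc : t ∈ T.acc) :
    T.toNoAcc.StepEmits w (withMode .rewind c') [] (withMode .emit c') := by
  obtain ⟨hΔ, rfl, hcell⟩ := stepVia_iff.1 h
  rw [hcell, ← frontCell_withMode_rewind] at hΔ hacc
  exact ⟨_, stepVia_iff.2 ⟨.resume hΔ hacc, rfl, frontCell_withMode_rewind c'⟩, rfl⟩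

lemma stepEmits_start :
    T.toNoAcc.StepEmits w (withMode .rewind (T.init, 0)) [] (withMode .emit (T.init, 0)) := by
  have hcell := frontCell_withMode_rewind (T.init, 0)
  have hzero : backCell T.toTwoWayAut (T.init, 0) = 0 := if_pos T.init_fwd
  refine ⟨_, stepVia_iff.2 ⟨?_, rfl, hcell⟩, rfl⟩
  rw [hcell, hzero]
  exact .start

lemma stepEmits_emit (h : StepVia T.toTwoWayAut w c t c') (hacc : t ∉ T.acc) :
    T.toNoAcc.StepEmits w (withMode .emit c) (T.out t) (withMode .emit c') := by
  obtain ⟨hΔ, rfl, hcell⟩ := stepVia_iff.1 h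
  exact ⟨_, stepVia_iff.2 ⟨.emit hΔ hacc, rfl, hcell⟩, rfl⟩

lemma stepEmits_advance (h : StepVia T.toTwoWayAut w c t c') (hacc : t ∈ T.acc) :
    T.toNoAcc.StepEmits w (withMode .emit c) (T.out t) (withMode .search c') := by
  obtain ⟨hΔ, rfl, hcell⟩ := stepVia_iff.1 h
  exact ⟨_, stepVia_iff.2 ⟨.advance hΔ hacc, rfl, hcell⟩, rfl⟩

end Steps

/-- The configuration of the look-ahead transducer that represents the state `s` of the look-ahead
along the sequence `cfg` of configurations of `T`. -/
def scanCfg (cfg : ℕ → T.Q × ℕ) (s : ScanState) : T.toNoAcc.Q × ℕ :=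
  withMode s.mode (cfg s.pos)

section Tracking

variable {cfg : ℕ → T.Q × ℕ} {tr : ℕ → T.Q × Option A × T.Q}
  {cfgS : ℕ → T.toNoAcc.Q × ℕ} {trS : ℕ → T.toNoAcc.Q × Option A × T.toNoAcc.Q}

lemma stepVia_of_eq_scanCfg (hrunS : IsRun T.toNoAcc.toTwoWayAut w cfgS trS)
    (hmax : IsMaximalRun T.toTwoWayAut w cfg tr) {s : ScanState} {j : ℕ}
    (hcfg : cfgS j = scanCfg cfg s) (hmode : s.mode ≠ .rewind) :
    StepVia T.toTwoWayAut w (cfg s.pos) (tr s.pos) (cfg (s.pos + 1)) := by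
  have hstep := hrunS.2 j
  rw [hcfg] at hstep
  exact hmax.2 _ (exists_stepVia_of_withMode hmode hstep)

variable [DecidablePred (· ∈ T.acc)]

lemma stepEmits_scanCfg (hzero : cfg 0 = (T.init, 0)) (s : ScanState)
    (hpast : ∀ i < s.pos, StepVia T.toTwoWayAut w (cfg i) (tr i) (cfg (i + 1)))
    (hnow : s.mode ≠ .rewind →
      StepVia T.toTwoWayAut w (cfg s.pos) (tr s.pos) (cfg (s.pos + 1))) :
    T.toNoAcc.StepEmits w (scanCfg cfg s) (scanOutput (fun i => T.out (tr i)) s)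
      (scanCfg cfg (scanStep (fun i => tr i ∈ T.acc) s)) := by
  fun_cases scanStep (fun i => tr i ∈ T.acc) s with
  | case1 k n hacc => exact stepEmits_turn (hnow (by simp)) hacc
  | case2 k n hacc => exact stepEmits_search (hnow (by simp)) hacc
  | case3 n => simpa only [scanCfg, scanOutput, hzero] using stepEmits_start
  | case4 k n hacc => exact stepEmits_resume (hpast k k.lt_succ_self) hacc
  | case5 k n hacc => exact stepEmits_rewind (hpast k k.lt_succ_self) hacc
  | case6 k n hacc => exact stepEmits_advance (hnow (by simp)) hacc
  | case7 k n hacc => exact stepEmits_emit (hnow (by simp)) hacc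

lemma exists_isRun_toNoAcc (hrun : IsRun T.toTwoWayAut w cfg tr) :
    ∃ trS, IsRun T.toNoAcc.toTwoWayAut w
        (fun j => scanCfg cfg (scan (fun i => tr i ∈ T.acc) j)) trS ∧
      ∀ j, T.toNoAcc.out (trS j) =
        scanOutput (fun i => T.out (tr i)) (scan (fun i => tr i ∈ T.acc) j) := by
  have hstep := fun j => stepEmits_scanCfg (w := w) hrun.1 (scan (fun i => tr i ∈ T.acc) j)
    (fun i _ => hrun.2 i) fun _ => hrun.2 _
  simp only [← scan_succ] at hstep
  choose trS htrS hout using hstep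
  exact ⟨trS, ⟨congrArg (withMode .search) hrun.1, htrS⟩, hout⟩

lemma eq_scanCfg_of_isRun_toNoAcc (hS : Deterministic T.toNoAcc.toTwoWayAut)
    (hrunS : IsRun T.toNoAcc.toTwoWayAut w cfgS trS)
    (hmax : IsMaximalRun T.toTwoWayAut w cfg tr) (j : ℕ) :
    cfgS j = scanCfg cfg (scan (fun i => tr i ∈ T.acc) j) ∧
      ∀ i < (scan (fun i => tr i ∈ T.acc) j).pos,
        StepVia T.toTwoWayAut w (cfg i) (tr i) (cfg (i + 1)) := by
  induction j with
  | zero => exact ⟨hrunS.1.trans (congrArg (withMode .search) hmax.1.symm), by simp [scan]⟩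
  | succ j ih =>
    obtain ⟨hcfg, hpast⟩ := ih
    have hnow := stepVia_of_eq_scanCfg hrunS hmax hcfg
    rw [scan_succ]
    constructor
    · exact ((stepEmits_scanCfg hmax.1 _ hpast hnow).unique hS (hcfg ▸ hrunS.2 j)).1.symm
    · intro i hi
      obtain hlt | ⟨rfl, hmode⟩ := lt_pos_or_eq_of_lt_scanStep_pos hi
      exacts [hpast i hlt, hnow hmode]

lemma out_eq_scanOutput_of_isRun_toNoAcc (hS : Deterministic T.toNoAcc.toTwoWayAut)
    (hrunS : IsRun T.toNoAcc.toTwoWayAut w cfgS trS)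
    (hmax : IsMaximalRun T.toTwoWayAut w cfg tr) (j : ℕ) :
    T.toNoAcc.out (trS j) =
      scanOutput (fun i => T.out (tr i)) (scan (fun i => tr i ∈ T.acc) j) := by
  obtain ⟨hcfg, hpast⟩ := eq_scanCfg_of_isRun_toNoAcc hS hrunS hmax j
  have hnow := stepVia_of_eq_scanCfg hrunS hmax hcfg
  exact ((stepEmits_scanCfg hmax.1 _ hpast hnow).unique hS (hcfg ▸ hrunS.2 j)).2.symm

end Tracking

theorem toNoAcc_realizes_iff (hS : Deterministic T.toNoAcc.toTwoWayAut) (x : ℕ → B) :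
    T.toNoAcc.Realizes w x ↔ T.Realizes w x := by
  classical
  constructor
  · rintro ⟨cfgS, trS, hrunS, hwholeS, hflatS⟩
    obtain ⟨cfg, tr, hmax⟩ := exists_isMaximalRun T.toTwoWayAut w
    have htrack := eq_scanCfg_of_isRun_toNoAcc hS hrunS hmax
    simp only [out_eq_scanOutput_of_isRun_toNoAcc hS hrunS hmax] at hflatS
    obtain ⟨hacc, hflat⟩ := (flattenTo_scanOutput_iff _ x).1 hflatS
    refine ⟨cfg, tr, ⟨hmax.1, fun i => ?_⟩, fun n => ?_, hacc, hflat⟩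
    · obtain ⟨j, hj⟩ := exists_scan_eq_emit hacc (i + 1)
      exact (htrack j).2 i (by simp [hj])
    · obtain ⟨j, hj⟩ := hwholeS n
      rw [(htrack j).1] at hj
      exact ⟨_, hj⟩
  · rintro ⟨cfg, tr, hrun, hwhole, hacc, hflat⟩
    obtain ⟨trS, hrunS, hout⟩ := exists_isRun_toNoAcc hrun
    refine ⟨_, trS, hrunS, fun n => ?_, ?_⟩
    · obtain ⟨i, hi⟩ := hwhole n
      obtain ⟨j, hj⟩ := exists_scan_eq_emit hacc i
      exact ⟨j, by simpa only [hj, scanCfg, withMode] using hi⟩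
    · simp only [hout]
      exact (flattenTo_scanOutput_iff _ x).2 ⟨hacc, hflat⟩

end BuchiTrans

theorem buchi_to_noacc_general {A B : Type} (T : BuchiTrans A B)
    (hrev : Reversible T.toTwoWayAut) :
    ∃ S : NoAccTrans A B,
      Reversible S.toTwoWayAut ∧
      Fintype.card S.Q = 3 * Fintype.card T.Q ∧
      ∀ w x, S.Realizes w x ↔ T.Realizes w x := by
  have hS : Reversible T.trim.toNoAcc.toTwoWayAut :=
    BuchiTrans.reversible_toNoAcc (BuchiTrans.reversible_trim hrev) BuchiTrans.not_mem_trim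
  exact ⟨T.trim.toNoAcc, hS, BuchiTrans.card_toNoAcc, fun _ x =>
    (BuchiTrans.toNoAcc_realizes_iff hS.1 x).trans (BuchiTrans.trim_realizes_iff hrev.1 x)⟩

/-- Every reversible two-way Büchi transducer `T` with `n` states is
equivalent to a reversible two-way transducer `S` with no acceptance condition and at most
`3n` states. -/
theorem buchi_to_noacc (A B : Type) [Fintype A] [Fintype B]
    (T : BuchiTrans A B) (n : ℕ)
    (hrev : Reversible T.toTwoWayAut) (hn : Fintype.card T.Q = n) :
    ∃ S : NoAccTrans A B,
      Reversible S.toTwoWayAut ∧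
      Fintype.card S.Q ≤ 3 * n ∧
      (∀ w x, S.Realizes w x ↔ T.Realizes w x) := by
  obtain ⟨S, hS, hcard, hreal⟩ := buchi_to_noacc_general T hrev
  exact ⟨S, hS, (hcard.trans (by rw [hn])).le, hreal⟩

end Paper
end

section
/- Let T be a deterministic two-way parity transducer and let T′ be the two-way transducer obtained from T by dropping the acceptance condition (replacing χ by ∅). Then dom(T) ⊆ dom(T′), ⟦T′⟧ agrees with ⟦T⟧ on dom(T), and for every u ∈ dom(T′) and every sequence (u_i) of words of dom(T) converging to u in the metric d(u,v) = 2^{−|u∧v|}, the sequence ⟦T⟧(u_i) converges to ⟦T′⟧(u). -/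
namespace Paper

/-- The transducer obtained from `T` by dropping the acceptance condition (`χ := ∅`). -/
def dropAcc {A B : Type} (T : TwoWayTrans A B) : TwoWayTrans A B where
  toTwoWayAut := T.toTwoWayAut
  CIdx := Empty
  finC := inferInstance
  color := fun c _ => c.elim
  out := T.out

/-! A step moves the head by at most one cell and depends only on the scanned symbol, so after `n`
steps a deterministic run has seen at most the first `n` letters of its input. Every finite prefix
of an infinite output is produced in finitely many steps, hence is already determined by a finite
prefix of the input. The acceptance condition only restricts the domain and never the output, so
this continuity is insensitive to it. -/

open Classical in
/-- The symbol scanned by the head of `M` in configuration `c` on input `w`, with the end-marker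
`⊢` encoded as `none`. Like `StepVia`, it puts the head of a backward state on the letter to the
left of the configuration's position. -/
noncomputable def scanned (M : TwoWayAut A) (w : ℕ → A) (c : M.Q × ℕ) : Option A :=
  if M.fwd c.1 then some (w c.2) else if c.2 = 0 then none else some (w (c.2 - 1))

section Runs

variable {M : TwoWayAut A} {w w' : ℕ → A}

theorem scanned_congr {c : M.Q × ℕ} (hw : Set.EqOn w w' (Set.Iic c.2)) :
    scanned M w c = scanned M w' c := by
  simp only [scanned, hw (Set.mem_Iic.2 le_rfl), hw (Set.mem_Iic.2 (Nat.sub_le c.2 1))]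

theorem StepVia.symbol_eq_scanned {c c' : M.Q × ℕ} {t : M.Q × Option A × M.Q}
    (h : StepVia M w c t c') : t.2.1 = scanned M w c := by
  obtain ⟨-, -, -, ⟨hfwd, ha, -⟩ | ⟨hbwd, hpos, ha, -⟩ | ⟨hbwd, hzero, ha, -⟩⟩ := h
  · simp only [scanned, if_pos hfwd, ha]
  · simp only [scanned, if_neg hbwd, if_neg hpos.ne', ha]
  · simp only [scanned, if_neg hbwd, if_pos hzero, ha]

theorem StepVia.position_le {c c' : M.Q × ℕ} {t : M.Q × Option A × M.Q}
    (h : StepVia M w c t c') : c'.2 ≤ c.2 + 1 := by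
  obtain ⟨-, -, -, hmove⟩ := h
  omega

theorem StepVia.target_unique {c c₁ c₂ : M.Q × ℕ} {t : M.Q × Option A × M.Q}
    (h₁ : StepVia M w c t c₁) (h₂ : StepVia M w' c t c₂) : c₁ = c₂ := by
  obtain ⟨-, -, hstate₁, hmove₁⟩ := h₁
  obtain ⟨-, -, hstate₂, hmove₂⟩ := h₂
  have hstate : c₁.1 = c₂.1 := hstate₁.symm.trans hstate₂
  rw [hstate] at hmove₁
  refine Prod.ext hstate ?_
  by_cases hc : M.fwd c.1 <;> by_cases hc' : M.fwd c₂.1 <;>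
    simp only [hc, hc', true_and, false_and, not_true, not_false_iff, or_false, false_or]
      at hmove₁ hmove₂ <;> omega

theorem StepVia.transition_unique (hdet : Deterministic M) {c c₁ c₂ : M.Q × ℕ}
    {t₁ t₂ : M.Q × Option A × M.Q} (h₁ : StepVia M w c t₁ c₁) (h₂ : StepVia M w' c t₂ c₂)
    (hw : Set.EqOn w w' (Set.Iic c.2)) : t₁ = t₂ := by
  have hsource : t₁.1 = t₂.1 := h₁.2.1.trans h₂.2.1.symm
  have hsymbol : t₁.2.1 = t₂.2.1 := by
    rw [h₁.symbol_eq_scanned, h₂.symbol_eq_scanned, scanned_congr hw]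
  have htarget : t₁.2.2 = t₂.2.2 := by
    refine hdet t₁.1 t₁.2.1 _ _ h₁.1 ?_
    rw [hsource, hsymbol]
    exact h₂.1
  exact Prod.ext hsource (Prod.ext hsymbol htarget)

variable {cfg cfg' : ℕ → M.Q × ℕ} {tr tr' : ℕ → M.Q × Option A × M.Q}

theorem IsRun.position_le (h : IsRun M w cfg tr) (i : ℕ) : (cfg i).2 ≤ i := by
  induction i with
  | zero => rw [h.1]
  | succ i ih => exact (h.2 i).position_le.trans (Nat.succ_le_succ ih)

theorem IsRun.transition_eq_of_cfg_eq (hdet : Deterministic M) (h : IsRun M w cfg tr)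
    (h' : IsRun M w' cfg' tr') {i : ℕ} (hcfg : cfg i = cfg' i)
    (hw : Set.EqOn w w' (Set.Iic i)) : tr i = tr' i :=
  (h.2 i).transition_unique hdet (hcfg ▸ h'.2 i)
    (hw.mono (Set.Iic_subset_Iic.2 (h.position_le i)))

theorem IsRun.cfg_eq (hdet : Deterministic M) (h : IsRun M w cfg tr) (h' : IsRun M w' cfg' tr')
    {n : ℕ} (hw : Set.EqOn w w' (Set.Iio n)) : cfg n = cfg' n := by
  induction n with
  | zero => exact h.1.trans h'.1.symm
  | succ n ih =>
    have hcfg : cfg n = cfg' n := ih (hw.mono (Set.Iio_subset_Iio n.le_succ))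
    have htr : tr n = tr' n :=
      h.transition_eq_of_cfg_eq hdet h' hcfg (hw.mono (Set.Iic_subset_Iio.2 n.lt_succ_self))
    have hstep' : StepVia M w' (cfg n) (tr n) (cfg' (n + 1)) := by
      rw [hcfg, htr]
      exact h'.2 n
    exact (h.2 n).target_unique hstep'

theorem IsRun.eqOn_transitions (hdet : Deterministic M) (h : IsRun M w cfg tr)
    (h' : IsRun M w' cfg' tr') {n : ℕ} (hw : Set.EqOn w w' (Set.Iio n)) :
    Set.EqOn tr tr' (Set.Iio n) := fun _ hi =>
  h.transition_eq_of_cfg_eq hdet h' (h.cfg_eq hdet h' (hw.mono (Set.Iio_subset_Iio hi.le)))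
    (hw.mono (Set.Iic_subset_Iio.2 hi))

end Runs

section Concatenation

variable {C : Type}

theorem prefixCat_congr {f g : ℕ → List C} {n : ℕ} (h : Set.EqOn f g (Set.Iio n)) :
    prefixCat f n = prefixCat g n := by
  induction n with
  | zero => rfl
  | succ n ih =>
    rw [prefixCat, prefixCat, ih (h.mono (Set.Iio_subset_Iio n.le_succ)), h n.lt_succ_self]

theorem IsPrefixOf.eqOn {l : List C} {x y : ℕ → C} (hx : IsPrefixOf l x) (hy : IsPrefixOf l y) :
    Set.EqOn x y (Set.Iio l.length) := fun i hi => (hx i hi).symm.trans (hy i hi)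

theorem FlattenTo.exists_eqOn_of_eqOn {f : ℕ → List C} {x : ℕ → C} (hf : FlattenTo f x) (n : ℕ) :
    ∃ N, ∀ (g : ℕ → List C) (y : ℕ → C), FlattenTo g y →
      Set.EqOn g f (Set.Iio N) → Set.EqOn y x (Set.Iio n) := by
  obtain ⟨N, hN⟩ := hf.2 n
  refine ⟨N, fun g y hg hgf => ?_⟩
  have hy : IsPrefixOf (prefixCat f N) y := prefixCat_congr hgf ▸ hg.1 N
  exact (hy.eqOn (hf.1 N)).mono (Set.Iio_subset_Iio hN)

end Concatenation

section Transducers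

variable {T : TwoWayTrans A B}

theorem TwoWayTrans.Realizes.exists_eqOn_of_eqOn (hdet : Deterministic T.toTwoWayAut)
    {w : ℕ → A} {x : ℕ → B} (hw : T.Realizes w x) (n : ℕ) :
    ∃ N, ∀ (w' : ℕ → A) (y : ℕ → B), T.Realizes w' y →
      Set.EqOn w' w (Set.Iio N) → Set.EqOn y x (Set.Iio n) := by
  obtain ⟨cfg, tr, hrun, -, -, hout⟩ := hw
  obtain ⟨N, hN⟩ := hout.exists_eqOn_of_eqOn n
  refine ⟨N, ?_⟩
  rintro w' y ⟨cfg', tr', hrun', -, -, hout'⟩ hww'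
  have htr : Set.EqOn tr' tr (Set.Iio N) := hrun'.eqOn_transitions hdet hrun hww'
  exact hN _ y hout' (htr.comp_left (g := T.out))

theorem TwoWayTrans.Realizes.to_dropAcc {w : ℕ → A} {x : ℕ → B} (h : T.Realizes w x) :
    (dropAcc T).Realizes w x := by
  obtain ⟨cfg, tr, hrun, hread, -, hout⟩ := h
  exact ⟨cfg, tr, hrun, hread, fun c => c.elim, hout⟩

end Transducers

theorem dropAcc_closure_general (T : TwoWayTrans A B) (hdet : Deterministic T.toTwoWayAut) :
    (∀ w x, T.Realizes w x → (dropAcc T).Realizes w x) ∧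
    (∀ (u : ℕ → A) (x : ℕ → B), (dropAcc T).Realizes u x →
      ∀ (us : ℕ → ℕ → A) (ys : ℕ → ℕ → B),
        (∀ i, (dropAcc T).Realizes (us i) (ys i)) →
        (∀ n : ℕ, ∃ i₀, ∀ j, i₀ ≤ j → ∀ m, m < n → us j m = u m) →
        (∀ n : ℕ, ∃ i₀, ∀ j, i₀ ≤ j → ∀ m, m < n → ys j m = x m)) := by
  refine ⟨fun _ _ => TwoWayTrans.Realizes.to_dropAcc, fun u x hu us ys hus hlim n => ?_⟩
  obtain ⟨N, hN⟩ := TwoWayTrans.Realizes.exists_eqOn_of_eqOn (T := dropAcc T) hdet hu n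
  obtain ⟨i₀, hi₀⟩ := hlim N
  exact ⟨i₀, fun j hj => hN (us j) (ys j) (hus j) (hi₀ j hj)⟩

/-- Let `T` be a deterministic two-way parity transducer and `T' = dropAcc T`
the transducer obtained by dropping the acceptance condition.  Then `dom T ⊆ dom T'` and
`⟦T'⟧` agrees with `⟦T⟧` on `dom T` (first conjunct), and for every `u ∈ dom T'` and every
sequence of words of `dom T` converging to `u` (in the metric `d(u,v) = 2^{-|u∧v|}`), the
sequence of their images under `⟦T⟧` converges to `⟦T'⟧ u` (second conjunct). -/
theorem dropAcc_closure (A B : Type) [Fintype A] [Fintype B]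
    (T : TwoWayTrans A B) (hdet : Deterministic T.toTwoWayAut) :
    (∀ w x, T.Realizes w x → (dropAcc T).Realizes w x) ∧
    (∀ (u : ℕ → A) (x : ℕ → B), (dropAcc T).Realizes u x →
      ∀ (us : ℕ → ℕ → A) (ys : ℕ → ℕ → B),
        (∀ i, T.Realizes (us i) (ys i)) →
        (∀ n : ℕ, ∃ i₀, ∀ j, i₀ ≤ j → ∀ m, m < n → us j m = u m) →
        (∀ n : ℕ, ∃ i₀, ∀ j, i₀ ≤ j → ∀ m, m < n → ys j m = x m)) := by
  obtain ⟨hdom, hcont⟩ := dropAcc_closure_general T hdet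
  exact ⟨hdom, fun u x hu us ys hus => hcont u x hu us ys fun i => hdom _ _ (hus i)⟩

end Paper
end
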